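/- Let X : I → ℝ^d be a database indexed by a finite set I, let i₀ ∈ I, and let X' be the restriction of X to I ∖ {i₀}. Then the set of outlier indices of X' equals the disjoint union (O(X) ∖ {i₀}) ∪ (CV(X, X i₀, k, r) ∖ {i₀}), where O(X) is the set of outlier indices of X; consequently q_count(X',k,r) = |O(X) ∖ {i₀}| + |CV(X, X i₀, k, r) ∖ {i₀}|. (Removing a record turns exactly the degree-k records within distance r of the removed record into new outliers.) -/

import Mathlib

open Finset
open scoped Classical

noncomputable section

/-- A point of `ℝ^d`. -/
abbrev Pt (d : ℕ) := EuclideanSpace ℝ (Fin d)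

variable {I : Type*} [Fintype I] [DecidableEq I]

/-- The degree of record `i` in a database `X : I → ℝ^d`: the number of other records
within distance `r`. -/
def deg {d : ℕ} (X : I → Pt d) (r : ℝ) (i : I) : ℕ :=
  (univ.filter fun j => j ≠ i ∧ ‖X j - X i‖ ≤ r).card

/-- `O(X)`: the set of outlier indices, that is, records with fewer than `k` neighbors
within radius `r`. -/
def Oset {d : ℕ} (X : I → Pt d) (k : ℕ) (r : ℝ) : Finset I :=
  univ.filter fun i => deg X r i < k

/-- `q_count(X,k,r) = |O(X)|`. -/
def qCount {d : ℕ} (X : I → Pt d) (k : ℕ) (r : ℝ) : ℕ :=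
  (Oset X k r).card

/-- `CV(X,x,m,r)`: the set of degree-`m` record indices within distance `r` of `x`
(empty for `m < 0`). -/
def CV {d : ℕ} (X : I → Pt d) (x : Pt d) (m : ℤ) (r : ℝ) : Finset I :=
  univ.filter fun i => (deg X r i : ℤ) = m ∧ ‖X i - x‖ ≤ r

/-!
Adjacency at distance at most `r` is symmetric, so deleting `i₀` lowers by one the degree of
exactly the records within distance `r` of it. Such a record ends below the threshold `k` iff its
original degree was below `k` or equal to `k`.
-/

/-- The set of records other than `i` within distance `r` of record `i`, whose cardinality is
`deg X r i`. -/
def neighbors {d : ℕ} (X : I → Pt d) (r : ℝ) (i : I) : Finset I :=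
  univ.filter fun j => j ≠ i ∧ ‖X j - X i‖ ≤ r

theorem card_erase_lt_iff {α : Type*} [DecidableEq α] {s : Finset α} {a : α} {k : ℕ} :
    #(s.erase a) < k ↔ #s < k ∨ #s = k ∧ a ∈ s := by
  by_cases ha : a ∈ s
  · have hcard : #(s.erase a) + 1 = #s := card_erase_add_one ha
    simp only [ha, and_true]
    omega
  · simp only [erase_eq_of_notMem ha, ha, and_false, or_false]

section Database

variable {d : ℕ} {X : I → Pt d} {x : Pt d} {r : ℝ} {k : ℕ} {m : ℤ} {i j i₀ : I}

theorem card_neighbors : #(neighbors X r i) = deg X r i := rfl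

theorem mem_neighbors : j ∈ neighbors X r i ↔ j ≠ i ∧ ‖X j - X i‖ ≤ r := by
  simp only [neighbors, mem_filter_univ]

theorem mem_neighbors_comm : j ∈ neighbors X r i ↔ i ∈ neighbors X r j := by
  simp only [mem_neighbors, ne_comm, norm_sub_rev]

theorem mem_Oset : i ∈ Oset X k r ↔ deg X r i < k := by
  simp only [Oset, mem_filter_univ]

theorem mem_CV : i ∈ CV X x m r ↔ (deg X r i : ℤ) = m ∧ ‖X i - x‖ ≤ r := by
  simp only [CV, mem_filter_univ]

theorem disjoint_Oset_CV (hkm : (k : ℤ) ≤ m) : Disjoint (Oset X k r) (CV X x m r) := by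
  refine disjoint_left.mpr fun i hO hCV => ?_
  have hlt : deg X r i < k := mem_Oset.mp hO
  have heq : (deg X r i : ℤ) = m := (mem_CV.mp hCV).1
  omega

theorem neighbors_restrict {p : I → Prop} [DecidablePred p] (i : Subtype p) :
    neighbors (fun j : Subtype p => X j) r i = (neighbors X r i).subtype p := by
  ext j
  simp only [mem_subtype, mem_neighbors, ne_eq, Subtype.ext_iff]

theorem deg_restrict {p : I → Prop} [DecidablePred p] (i : Subtype p) :
    deg (fun j : Subtype p => X j) r i = #((neighbors X r i).filter p) := by
  rw [← card_neighbors, neighbors_restrict, card_subtype]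

theorem deg_remove (i : {i : I // i ≠ i₀}) :
    deg (fun j : {i : I // i ≠ i₀} => X j) r i = #((neighbors X r i).erase i₀) := by
  rw [deg_restrict, filter_ne']

theorem deg_remove_lt_iff (i : {i : I // i ≠ i₀}) :
    deg (fun j : {i : I // i ≠ i₀} => X j) r i < k ↔
      deg X r i < k ∨ deg X r i = k ∧ ‖X i - X i₀‖ ≤ r := by
  have hmem : i₀ ∈ neighbors X r i ↔ ‖X i - X i₀‖ ≤ r := by
    rw [mem_neighbors_comm, mem_neighbors, and_iff_right i.2]
  rw [deg_remove, card_erase_lt_iff, card_neighbors, hmem]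

theorem Oset_remove :
    Oset (fun j : {i : I // i ≠ i₀} => X j) k r =
      (Oset X k r ∪ CV X (X i₀) k r).subtype (· ≠ i₀) := by
  ext i
  simp only [mem_subtype, mem_union, mem_Oset, mem_CV, Nat.cast_inj, deg_remove_lt_iff]

theorem image_Oset_remove :
    (Oset (fun j : {i : I // i ≠ i₀} => X j) k r).image Subtype.val =
      (Oset X k r \ {i₀}) ∪ (CV X (X i₀) k r \ {i₀}) :=
  calc (Oset (fun j : {i : I // i ≠ i₀} => X j) k r).image Subtype.val
      = ((Oset X k r ∪ CV X (X i₀) k r).subtype (· ≠ i₀)).map (.subtype _) := by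
        rw [Oset_remove, map_eq_image, Function.Embedding.coe_subtype]
    _ = (Oset X k r ∪ CV X (X i₀) k r) \ {i₀} := by
        rw [subtype_map, filter_ne', sdiff_singleton_eq_erase]
    _ = (Oset X k r \ {i₀}) ∪ (CV X (X i₀) k r \ {i₀}) := union_sdiff_distrib _ _ _

theorem qCount_restrict {p : I → Prop} [DecidablePred p] :
    qCount (fun j : Subtype p => X j) k r =
      #((Oset (fun j : Subtype p => X j) k r).image Subtype.val) :=
  (card_image_of_injective _ Subtype.val_injective).symm

end Database

/-- Removing the record `i₀` turns exactly the degree-`k` records within distance `r` of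
the removed record into new outliers: the outlier set of the restricted database is the
disjoint union `(O(X) ∖ {i₀}) ∪ (CV(X, X i₀, k, r) ∖ {i₀})`, and the counts add up. -/
theorem outliers_after_removal
    (d k : ℕ) (hd : 1 ≤ d) (hk : 1 ≤ k) (r : ℝ) (hr : 0 < r)
    (I : Type*) [Fintype I] [DecidableEq I] (X : I → Pt d) (i₀ : I) :
    ((Oset (fun j : {i : I // i ≠ i₀} => X j) k r).image Subtype.val
        = (Oset X k r \ {i₀}) ∪ (CV X (X i₀) (k : ℤ) r \ {i₀})) ∧
    Disjoint (Oset X k r \ {i₀}) (CV X (X i₀) (k : ℤ) r \ {i₀}) ∧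
    qCount (fun j : {i : I // i ≠ i₀} => X j) k r
        = (Oset X k r \ {i₀}).card + (CV X (X i₀) (k : ℤ) r \ {i₀}).card := by
  have hdisj : Disjoint (Oset X k r \ {i₀}) (CV X (X i₀) (k : ℤ) r \ {i₀}) :=
    (disjoint_Oset_CV le_rfl).mono sdiff_subset sdiff_subset
  refine ⟨image_Oset_remove, hdisj, ?_⟩
  rw [qCount_restrict, image_Oset_remove, card_union_of_disjoint hdisj]
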